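/- Assume (H1) and (H2), assume f is topologically exact (for every nonempty open U ⊆ M there is n ≥ 1 with f^n(U) = M), and let φ : M → ℝ be α-Hölder with sup φ − inf φ < log deg(f) − log q. Then there exist λ ≥ deg(f)·e^{inf φ} and a Borel probability measure ν on M such that ∫ 𝓛_φ g dν = λ·∫ g dν for every continuous g : M → ℝ, and ν has Jacobian J_ν f = λ·e^{−φ} with respect to f, i.e. ν(f(E)) = ∫_E λ·e^{−φ} dν for every Borel set E ⊆ M on which f is injective. -/

import Mathlib

open MeasureTheory Real Set Filter Topology

/-- The Ruelle–Perron–Frobenius transfer operator of `(f, φ)`. -/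
noncomputable def transferOp {M : Type*} (f : M → M) (φ g : M → ℝ) : M → ℝ :=
  fun x => ∑' y : {y : M // f y = x}, Real.exp (φ y.1) * g y.1

/-- `g` satisfies the global `(C, α)`-Hölder estimate. -/
def HolderBound {M : Type*} [MetricSpace M] (α C : ℝ) (g : M → ℝ) : Prop :=
  ∀ x y : M, |g x - g y| ≤ C * dist x y ^ α

theorem aux_pos_open {M : Type*} [TopologicalSpace M] [CompactSpace M] :
    IsOpen {h : C(M, ℝ) | ∀ x, 0 < h x} := by
  have h := ContinuousMap.isOpen_setOfPred_mapsTo (X := M) (Y := ℝ) isCompact_univ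
    (isOpen_Ioi (a := (0:ℝ)))
  convert h using 3
  simp [Set.MapsTo]

theorem aux_eigen {M : Type*} [TopologicalSpace M] [CompactSpace M] [Nonempty M]
    (T : C(M, ℝ) →ₗ[ℝ] C(M, ℝ)) (hT : ∀ g : C(M, ℝ), (∀ x, 0 ≤ g x) → ∀ x, 0 ≤ T g x) :
    ∃ s : ℝ, ∀ g : C(M, ℝ), ∃ x, T g x ≤ s * g x := by
  by_contra hcon
  push Not at hcon
  let B : C(M, ℝ) → Set ℝ := fun g => {s | ∀ x, 0 < (T g - s • g) x}
  have hB : ∀ g, IsOpen (B g) := fun g =>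
    aux_pos_open.preimage (f := fun s : ℝ => T g - s • g) (by fun_prop)
  let Bp : Set ℝ := ⋃ g ∈ {g : C(M, ℝ) | ∃ x, 0 < g x}, B g
  let Bm : Set ℝ := ⋃ g ∈ {g : C(M, ℝ) | ∀ x, g x < 0}, B g
  have hBp : IsOpen Bp := isOpen_biUnion fun g _ => hB g
  have hBm : IsOpen Bm := isOpen_biUnion fun g _ => hB g
  have memp : ∀ s, s ∈ Bp ↔ ∃ g : C(M, ℝ), (∃ x, 0 < g x) ∧ ∀ x, s * g x < T g x := by
    intro s; simp [Bp, B]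
  have memm : ∀ s, s ∈ Bm ↔ ∃ g : C(M, ℝ), (∀ x, g x < 0) ∧ ∀ x, s * g x < T g x := by
    intro s; simp [Bm, B]
  have hcov : (Set.univ : Set ℝ) ⊆ Bp ∪ Bm := by
    intro s _
    obtain ⟨g, hg⟩ := hcon s
    by_cases hp : ∃ x, 0 < g x
    · left; exact (memp s).2 ⟨g, hp, hg⟩
    · right
      push Not at hp
      refine (memm s).2 ⟨g, fun x => lt_of_le_of_ne (hp x) fun h0 => ?_, hg⟩
      have h1 := hg x
      have h2 := hT (-g) (fun x => by simpa using hp x) x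
      rw [map_neg] at h2
      simp at h2
      rw [h0] at h1
      linarith
  have hdisj : Set.univ ∩ (Bp ∩ Bm) = ∅ := by
    rw [Set.univ_inter, Set.eq_empty_iff_forall_notMem]
    rintro s ⟨h1, h2⟩
    obtain ⟨g, ⟨x0, hx0⟩, hg⟩ := (memp s).1 h1
    obtain ⟨h, hh0, hh⟩ := (memm s).1 h2
    obtain ⟨x, -, hx⟩ := isCompact_univ.exists_isMaxOn (Set.univ_nonempty)
      (f := fun x => g x / (-h x)) (Continuous.continuousOn (by
        refine g.continuous.div h.continuous.neg fun x => ?_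
        have := hh0 x
        linarith))
    have hmax : ∀ y, g y / (-h y) ≤ g x / (-h x) := fun y => hx (Set.mem_univ y)
    set c := g x / (-h x) with hc
    have hcpos : 0 < c := lt_of_lt_of_le (div_pos hx0 (by linarith [hh0 x0])) (hmax x0)
    have hle : ∀ y, g y ≤ - c * h y := by
      intro y
      have := (div_le_iff₀ (by linarith [hh0 y])).1 (hmax y)
      linarith
    have heq : g x = - c * h x := by
      rw [hc]; field_simp [(hh0 x).ne]
    have h3 := hT (-(c • h) - g) (fun y => by
      have := hle y
      simp; linarith) x
    rw [map_sub, map_neg, map_smul] at h3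
    simp at h3
    have h4 := hg x
    have h5 := mul_lt_mul_of_pos_left (hh x) hcpos
    rw [heq] at h4
    linarith
  obtain ⟨x⟩ := ‹Nonempty M›
  obtain ⟨K, hK⟩ : ∃ K : ℝ, ∀ x, |T 1 x| ≤ K := ⟨‖T 1‖, fun x => (T 1).norm_coe_le_norm x⟩
  have hp : (-(K+1)) ∈ Bp := by
    refine (memp _).2 ⟨1, ⟨x, by simp⟩, fun y => ?_⟩
    have := abs_le.1 (hK y)
    simp; linarith
  have hm : (K+1) ∈ Bm := by
    refine (memm _).2 ⟨-1, fun y => by simp, fun y => ?_⟩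
    have := abs_le.1 (hK y)
    rw [map_neg]
    simp; linarith
  rcases isPreconnected_iff_subset_of_disjoint.1 (isPreconnected_univ (α := ℝ)) Bp Bm hBp hBm
    hcov hdisj with h | h
  · have : (K+1) ∈ Set.univ ∩ (Bp ∩ Bm) := ⟨trivial, h trivial, hm⟩
    rw [hdisj] at this; exact this
  · have : (-(K+1)) ∈ Set.univ ∩ (Bp ∩ Bm) := ⟨trivial, hp, h trivial⟩
    rw [hdisj] at this; exact this

theorem aux_measure {M : Type*} [TopologicalSpace M] [T2Space M] [CompactSpace M] [Nonempty M]
    [MeasurableSpace M] [BorelSpace M]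
    (T : C(M, ℝ) →ₗ[ℝ] C(M, ℝ)) (hT : ∀ g : C(M, ℝ), (∀ x, 0 ≤ g x) → ∀ x, 0 ≤ T g x) :
    ∃ (s : ℝ) (ν : Measure M), IsProbabilityMeasure ν ∧
      ∀ g : C(M, ℝ), ∫ x, T g x ∂ν = s * ∫ x, g x ∂ν := by
  obtain ⟨s, hs⟩ := aux_eigen T hT
  let V : Submodule ℝ C(M, ℝ) := LinearMap.range (T - s • LinearMap.id)
  have hconv : Convex ℝ {h : C(M, ℝ) | ∀ x, 0 < h x} := by
    intro a ha b hb u v hu hv huv x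
    have h1 := ha x
    have h2 := hb x
    simp only [ContinuousMap.add_apply, ContinuousMap.smul_apply, smul_eq_mul]
    rcases hu.eq_or_lt with rfl | hu
    · have : v = 1 := by linarith
      subst this; simpa using h2
    · have := mul_pos hu h1
      have := mul_nonneg hv h2.le
      linarith
  have hd : Disjoint {h : C(M, ℝ) | ∀ x, 0 < h x} (V : Set C(M, ℝ)) := by
    rw [Set.disjoint_left]
    rintro h hh ⟨g, rfl⟩
    obtain ⟨x, hx⟩ := hs g
    have := hh x
    simp at this
    linarith
  obtain ⟨F, u, hF, hV⟩ := geometric_hahn_banach_open hconv aux_pos_open V.convex hd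
  have hu : u ≤ 0 := by simpa using hV 0 V.zero_mem
  have hF0 : ∀ g : C(M, ℝ), (∀ x, 0 < g x) → F g < 0 := fun g hg => (hF g hg).trans_le hu
  have hFV : ∀ v ∈ V, F v = 0 := by
    intro v hv
    by_contra hne
    have := hV (((u - 1) / F v) • v) (V.smul_mem _ hv)
    rw [map_smul, smul_eq_mul, div_mul_cancel₀ _ hne] at this
    linarith
  have hF1 : F 1 < 0 := hF0 1 (fun x => by simp)
  have hFn : ∀ g : C(M, ℝ), (∀ x, 0 ≤ g x) → F g ≤ 0 := by
    intro g hg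
    by_contra hpos
    push Not at hpos
    have := hF0 (g + (F g / (-F 1)) • 1) (fun x => by
      have h1 := hg x
      have h2 : 0 < F g / (-F 1) := div_pos hpos (by linarith)
      simp only [ContinuousMap.add_apply, ContinuousMap.smul_apply, smul_eq_mul,
        ContinuousMap.one_apply]
      linarith)
    rw [map_add, map_smul, smul_eq_mul, div_neg, neg_mul, div_mul_cancel₀ _ hF1.ne] at this
    linarith
  let Λ0 : CompactlySupportedContinuousMap M ℝ →ₗ[ℝ] ℝ :=
    { toFun := fun g => (F 1)⁻¹ * F g.toContinuousMap
      map_add' := fun a b => by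
        rw [← mul_add, ← map_add]; rfl
      map_smul' := fun c a => by
        have : F (c • a).toContinuousMap = c * F a.toContinuousMap := by
          rw [← smul_eq_mul, ← map_smul]; rfl
        rw [this]; simp; ring }
  let Λ : CompactlySupportedContinuousMap M ℝ →ₚ[ℝ] ℝ := PositiveLinearMap.mk₀ Λ0 (fun g hg => by
    exact mul_nonneg_of_nonpos_of_nonpos (inv_nonpos.2 hF1.le) (hFn _ fun x => hg x))
  let ν := RealRMK.rieszMeasure Λ
  have hint : ∀ g : C(M, ℝ), ∫ x, g x ∂ν = (F 1)⁻¹ * F g := fun g =>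
    RealRMK.integral_rieszMeasure Λ (CompactlySupportedContinuousMap.continuousMapEquiv g)
  refine ⟨s, ν, ?_, fun g => ?_⟩
  · have h1 := hint 1
    rw [inv_mul_cancel₀ hF1.ne] at h1
    simp [Measure.real] at h1
    constructor
    rwa [ENNReal.toReal_eq_one_iff] at h1
  · rw [hint, hint]
    have := hFV (T g - s • g) ⟨g, by simp⟩
    rw [map_sub, map_smul, smul_eq_mul] at this
    have : F (T g) = s * F g := by linarith
    rw [this]; ring

theorem aux_cont {M : Type*} [TopologicalSpace M] [T2Space M]
    (f : M → M) (hf : IsLocalHomeomorph f) (deg : ℕ)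
    (hdeg : ∀ x : M, Nat.card {y : M // f y = x} = deg)
    (hfin : ∀ x, Finite {y : M // f y = x}) (h : M → ℝ) (hh : Continuous h) :
    Continuous fun x => ∑' y : {y : M // f y = x}, h y.1 := by
  rw [continuous_iff_continuousAt]
  intro x0
  have := hfin x0
  have := Fintype.ofFinite {y : M // f y = x0}
  obtain ⟨U, hU, hUd⟩ := Set.Finite.t2_separation (s := {y : M | f y = x0}) (hfin x0)
  choose e he1 he2 using hf
  have htgt : ∀ y : {y : M // f y = x0}, x0 ∈ (e y.1).target := by
    intro y
    have := (e y.1).map_source (he1 y.1)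
    rwa [← he2 y.1, y.2] at this
  have hsy : ∀ y : {y : M // f y = x0}, (e y.1).symm x0 = y.1 := by
    intro y
    have := (e y.1).left_inv (he1 y.1)
    rwa [← he2 y.1, y.2] at this
  have hca : ∀ y : {y : M // f y = x0}, ContinuousAt (e y.1).symm x0 := fun y =>
    (e y.1).continuousAt_symm (htgt y)
  have hev : ∀ᶠ z in 𝓝 x0, ∀ y : {y : M // f y = x0},
      z ∈ (e y.1).target ∧ (e y.1).symm z ∈ U y.1 := by
    rw [Filter.eventually_all]
    intro y
    refine Filter.Eventually.and ((e y.1).open_target.mem_nhds (htgt y)) ?_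
    refine (hca y).eventually_mem ((hU y.1).2.mem_nhds ?_)
    rw [hsy]; exact (hU y.1).1
  have heq : (fun x => ∑' y : {y : M // f y = x}, h y.1) =ᶠ[𝓝 x0]
      fun z => ∑ y : {y : M // f y = x0}, h ((e y.1).symm z) := by
    filter_upwards [hev] with z hz
    have hfz : ∀ y : {y : M // f y = x0}, f ((e y.1).symm z) = z := by
      intro y
      have := (e y.1).right_inv (hz y).1
      rwa [← he2 y.1] at this
    let k : {y : M // f y = x0} → {y : M // f y = z} := fun y => ⟨(e y.1).symm z, hfz y⟩
    have := hfin z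
    have hk : Function.Bijective k := by
      refine Function.Injective.bijective_of_nat_card_le ?_ (by rw [hdeg, hdeg])
      intro a b hab
      by_contra hne
      have hd := hUd a.2 b.2 (fun h => hne (Subtype.ext h))
      have h1 : (e a.1).symm z = (e b.1).symm z := congrArg Subtype.val hab
      exact Set.disjoint_left.1 hd (hz a).2 (h1 ▸ (hz b).2)
    rw [← (Equiv.ofBijective k hk).tsum_eq, tsum_fintype]
    rfl
  refine ContinuousAt.congr ?_ heq.symm
  refine tendsto_finsetSum _ fun y _ => ?_
  exact (hh.continuousAt).comp (hca y)

theorem aux_lh {M : Type*} [MetricSpace M] [CompactSpace M]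
    (f : M → M) (hfc : Continuous f) (Lc : M → ℝ)
    (hloc : ∀ x : M, ∃ U : Set M, IsOpen U ∧ x ∈ U ∧ Set.InjOn f U ∧
      IsOpen (f '' U) ∧ ∀ y ∈ U, ∀ z ∈ U, dist y z ≤ Lc x * dist (f y) (f z)) :
    IsLocalHomeomorph f := by
  rw [isLocalHomeomorph_iff_isOpenEmbedding_restrict]
  intro x
  obtain ⟨U, hU, hx, -, hfU, hd⟩ := hloc x
  refine ⟨U, hU.mem_nhds hx, ?_⟩
  have ha : AntilipschitzWith (Lc x).toNNReal (U.domRestrict f) := by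
    refine AntilipschitzWith.of_le_mul_dist fun a b => ?_
    refine (hd a.1 a.2 b.1 b.2).trans ?_
    exact mul_le_mul_of_nonneg_right (Real.le_coe_toNNReal _) dist_nonneg
  refine ⟨(ha.isUniformEmbedding ?_).isEmbedding, ?_⟩
  · exact (CompactSpace.uniformContinuous_of_continuous hfc).comp uniformContinuous_subtype_val
  · rwa [Set.range_domRestrict]

theorem aux_jac {M : Type*} [MetricSpace M] [CompactSpace M]
    [MeasurableSpace M] [BorelSpace M]
    (f : M → M) (hfc : Continuous f) (hfin : ∀ x, Finite {y : M // f y = x})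
    (φ : M → ℝ) (hφ : Continuous φ)
    (hT : ∀ g : M → ℝ, Continuous g → Continuous (transferOp f φ g))
    (lam : ℝ) (hlam : 0 ≤ lam) (ν : Measure M) [IsProbabilityMeasure ν]
    (hν : ∀ g : M → ℝ, Continuous g →
        ∫ x, transferOp f φ g x ∂ν = lam * ∫ x, g x ∂ν)
    (E : Set M) (hE : MeasurableSet E) (hinj : Set.InjOn f E) :
    ν (f '' E) = ∫⁻ x in E, ENNReal.ofReal (lam * Real.exp (-φ x)) ∂ν := by
  let κ : M → Measure M := fun x => Measure.sum fun y : {y : M // f y = x} =>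
    ENNReal.ofReal (Real.exp (φ y.1)) • Measure.dirac y.1
  have hκ : ∀ x (g : M → ENNReal), Measurable g → ∫⁻ y, g y ∂κ x =
      ∑' y : {y : M // f y = x}, ENNReal.ofReal (Real.exp (φ y.1)) * g y.1 := by
    intro x g hg
    simp only [κ, lintegral_sum_measure, lintegral_smul_measure, smul_eq_mul]
    congr 1; ext y
    rw [lintegral_dirac' _ hg]
  have hκc : ∀ x (g : M → NNReal), Continuous g → ∫⁻ y, (g y : ENNReal) ∂κ x =
      ENNReal.ofReal (transferOp f φ (fun y => (g y : ℝ)) x) := by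
    intro x g hg
    have := hfin x
    have := Fintype.ofFinite {y : M // f y = x}
    rw [hκ x _ hg.measurable.coe_nnreal_ennreal, transferOp, tsum_fintype, tsum_fintype,
      ENNReal.ofReal_sum_of_nonneg (fun y _ => by positivity)]
    refine Finset.sum_congr rfl fun y _ => ?_
    rw [ENNReal.ofReal_mul (by positivity), ENNReal.ofReal_coe_nnreal]
  have hfinm : ∀ x, IsFiniteMeasure (κ x) := by
    intro x
    constructor
    have := hκc x (fun _ => 1) continuous_const
    simp at this
    rw [this]; exact ENNReal.ofReal_lt_top
  have hm1 : ∀ g : M → NNReal, Continuous g → Measurable fun x => ∫⁻ y, (g y : ENNReal) ∂κ x := by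
    intro g hg
    simp_rw [fun x => hκc x g hg]
    exact (hT _ (by fun_prop)).measurable.ennreal_ofReal
  have hmeas : Measurable κ := by
    refine Measurable.measure_of_isPiSystem (S := {s | IsClosed s}) ?_ isPiSystem_isClosed ?_ ?_
    · rw [← borel_eq_generateFrom_isClosed]; exact BorelSpace.measurable_eq
    · intro F hF
      refine measurable_of_tendsto_metrizable
        (f := fun n x => ∫⁻ y, ((IsClosed.apprSeq hF n) y : ENNReal) ∂κ x)
        (fun n => hm1 _ (IsClosed.apprSeq hF n).continuous) ?_
      rw [tendsto_pi_nhds]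
      intro x
      exact HasOuterApproxClosed.tendsto_lintegral_apprSeq hF (κ x)
    · simpa using hm1 (fun _ => 1) continuous_const
  have hbind : ENNReal.ofReal lam • ν = ν.bind κ := by
    have : IsFiniteMeasure (ENNReal.ofReal lam • ν) := Measure.smul_finite ν ENNReal.ofReal_ne_top
    refine ext_of_forall_lintegral_eq_of_IsFiniteMeasure fun g => ?_
    rw [Measure.lintegral_bind hmeas.aemeasurable
      g.continuous.measurable.coe_nnreal_ennreal.aemeasurable]
    simp_rw [fun x => hκc x g g.continuous]
    have hgc : Continuous fun y => (g y : ℝ) := by fun_prop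
    have hTc := hT _ hgc
    have hi : ∀ k : M → ℝ, Continuous k → Integrable k ν := fun k hk =>
      hk.integrable_of_hasCompactSupport (HasCompactSupport.of_compactSpace k)
    rw [← ofReal_integral_eq_lintegral_ofReal (hi _ hTc), hν _ hgc, ENNReal.ofReal_mul hlam,
      ofReal_integral_eq_lintegral_ofReal (hi _ hgc), lintegral_smul_measure, smul_eq_mul]
    · simp
    · exact Filter.Eventually.of_forall fun x => by simp
    · exact Filter.Eventually.of_forall fun x => tsum_nonneg fun y => by positivity
  have hgm : Measurable (E.indicator fun x => ENNReal.ofReal (Real.exp (-φ x))) :=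
    Measurable.indicator (by fun_prop) hE
  have hfE : MeasurableSet (f '' E) := hE.image_of_continuousOn_injOn hfc.continuousOn hinj
  have hpt : ∀ x, ∫⁻ y, (E.indicator fun x => ENNReal.ofReal (Real.exp (-φ x))) y ∂κ x =
      (f '' E).indicator 1 x := by
    intro x
    rw [hκ x _ hgm]
    have hone : ∀ y ∈ E, ENNReal.ofReal (Real.exp (φ y)) *
        (E.indicator fun x => ENNReal.ofReal (Real.exp (-φ x))) y = 1 := by
      intro y hy
      rw [Set.indicator_of_mem hy, ← ENNReal.ofReal_mul (by positivity), ← Real.exp_add]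
      simp
    by_cases hx : x ∈ f '' E
    · rw [Set.indicator_of_mem hx]
      obtain ⟨y, hy, hyx⟩ := hx
      rw [tsum_eq_single (⟨y, hyx⟩ : {y : M // f y = x})]
      · exact hone y hy
      · intro z hz
        rw [Set.indicator_of_notMem, mul_zero]
        intro hzE
        exact hz (Subtype.ext (hinj hzE hy (z.2.trans hyx.symm)))
    · rw [Set.indicator_of_notMem hx]
      refine ENNReal.tsum_eq_zero.2 fun z => ?_
      rw [Set.indicator_of_notMem, mul_zero]
      intro hzE
      exact hx ⟨z.1, hzE, z.2⟩
  have hfinal := Measure.lintegral_bind (m := ν) hmeas.aemeasurable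
    (f := E.indicator fun x => ENNReal.ofReal (Real.exp (-φ x))) hgm.aemeasurable
  simp_rw [hpt] at hfinal
  rw [lintegral_indicator_one hfE, ← hbind, lintegral_smul_measure, lintegral_indicator hE,
    smul_eq_mul, ← lintegral_const_mul _ (by fun_prop)] at hfinal
  rw [← hfinal]
  simp_rw [ENNReal.ofReal_mul hlam]

/-- Proposition (existence of an expanding conformal measure): under (H1), (H2),
topological exactness of `f`, and `sup φ - inf φ < log deg f - log q`, there are
`λ ≥ deg f · e^{inf φ}` and a Borel probability measure `ν` with `𝓛_φ^* ν = λ ν`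
and Jacobian `J_ν f = λ e^{-φ}`. -/
theorem conformal_measure_exists
    {M : Type*} [MetricSpace M] [CompactSpace M] [ConnectedSpace M]
    [MeasurableSpace M] [BorelSpace M]
    (f : M → M) (hfc : Continuous f)
    (Lc : M → ℝ) (hLc : Continuous Lc)
    (hloc : ∀ x : M, ∃ U : Set M, IsOpen U ∧ x ∈ U ∧ Set.InjOn f U ∧
      IsOpen (f '' U) ∧ ∀ y ∈ U, ∀ z ∈ U, dist y z ≤ Lc x * dist (f y) (f z))
    (deg q : ℕ) (hdeg : ∀ x : M, Nat.card {y : M // f y = x} = deg)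
    (σ L : ℝ) (hσ : 1 < σ) (hL : 1 ≤ L)
    (A : Set M) (hA : IsOpen A)
    (hH1 : ∀ x : M, (x ∈ A → Lc x ≤ L) ∧ (x ∉ A → Lc x ≤ σ⁻¹))
    (hH2 : ∃ 𝒰 : Finset (Set M), (∀ U ∈ 𝒰, IsOpen U ∧ Set.InjOn f U) ∧
      (⋃ U ∈ 𝒰, U) = Set.univ ∧ ∃ 𝒰' ⊆ 𝒰, 𝒰'.card = q ∧ A ⊆ ⋃ U ∈ 𝒰', U)
    (hq : q < deg)
    (hexact : ∀ U : Set M, IsOpen U → U.Nonempty → ∃ n : ℕ, 1 ≤ n ∧ f^[n] '' U = Set.univ)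
    (α : ℝ) (hα0 : 0 < α) (hα1 : α ≤ 1)
    (φ : M → ℝ) (hφH : ∃ C, 0 ≤ C ∧ HolderBound α C φ)
    (hφ : (⨆ x, φ x) - (⨅ x, φ x) < Real.log deg - Real.log q) :
    ∃ (lam : ℝ) (ν : Measure M), IsProbabilityMeasure ν ∧
      (deg : ℝ) * Real.exp (⨅ x, φ x) ≤ lam ∧
      (∀ g : M → ℝ, Continuous g →
        ∫ x, transferOp f φ g x ∂ν = lam * ∫ x, g x ∂ν) ∧
      ∀ E : Set M, MeasurableSet E → Set.InjOn f E →
        ν (f '' E) = ∫⁻ x in E, ENNReal.ofReal (lam * Real.exp (-φ x)) ∂ν := by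
  have hdpos : 0 < deg := by omega
  have hfin : ∀ x, Finite {y : M // f y = x} := fun x =>
    Nat.finite_of_card_ne_zero (by rw [hdeg]; omega)
  obtain ⟨C, hC0, hC⟩ := hφH
  have hφc : Continuous φ := by
    rw [continuous_iff_continuousAt]
    intro x
    rw [ContinuousAt, tendsto_iff_dist_tendsto_zero]
    have h1 : Tendsto (fun y => C * dist y x ^ α) (𝓝 x) (𝓝 0) := by
      have : ContinuousAt (fun y => C * dist y x ^ α) x := by
        refine continuousAt_const.mul (ContinuousAt.rpow_const (by fun_prop) (Or.inr hα0.le))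
      have h2 := this.tendsto
      simpa [Real.zero_rpow hα0.ne'] using h2
    exact squeeze_zero (fun y => dist_nonneg) (fun y => by rw [Real.dist_eq]; exact hC y x) h1
  have hlh := aux_lh f hfc Lc hloc
  have hTc : ∀ g : M → ℝ, Continuous g → Continuous (transferOp f φ g) := fun g hg =>
    aux_cont f hlh deg hdeg hfin (fun y => Real.exp (φ y) * g y) (by fun_prop)
  have hsum : ∀ x (g : M → ℝ), Summable fun y : {y : M // f y = x} => Real.exp (φ y.1) * g y.1 := by
    intro x g
    have := hfin x
    exact Summable.of_finite
  let T : C(M, ℝ) →ₗ[ℝ] C(M, ℝ) :=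
    { toFun := fun g => ⟨transferOp f φ g, hTc g g.continuous⟩
      map_add' := fun a b => by
        ext x
        simp only [ContinuousMap.coe_mk, ContinuousMap.add_apply, transferOp]
        rw [← (hsum x a).tsum_add (hsum x b)]
        refine tsum_congr fun y => ?_
        first | ring | (simp; ring)
      map_smul' := fun c a => by
        ext x
        simp only [ContinuousMap.coe_mk, ContinuousMap.smul_apply, transferOp, RingHom.id_apply,
          smul_eq_mul]
        rw [← tsum_mul_left]
        refine tsum_congr fun y => ?_
        first | ring | (simp; ring) }
  obtain ⟨lam, ν, hprob, hν⟩ := aux_measure T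
    (fun g hg x => tsum_nonneg fun y => mul_nonneg (Real.exp_pos _).le (hg y.1))
  have hν' : ∀ g : M → ℝ, Continuous g →
        ∫ x, transferOp f φ g x ∂ν = lam * ∫ x, g x ∂ν := fun g hg => hν ⟨g, hg⟩
  have hlb : (deg : ℝ) * Real.exp (⨅ x, φ x) ≤ lam := by
    have h1 := hν' (fun _ => 1) continuous_const
    simp only [integral_const, probReal_univ, smul_eq_mul, mul_one] at h1
    rw [← h1]
    have hbdd : BddBelow (Set.range φ) := (isCompact_range hφc).bddBelow
    have hpt : ∀ x, (deg : ℝ) * Real.exp (⨅ x, φ x) ≤ transferOp f φ (fun _ => 1) x := by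
      intro x
      have := hfin x
      have := Fintype.ofFinite {y : M // f y = x}
      rw [transferOp, tsum_fintype, ← hdeg x, Nat.card_eq_fintype_card, ← nsmul_eq_mul]
      refine Finset.card_nsmul_le_sum _ _ _ fun y _ => ?_
      rw [mul_one]
      exact Real.exp_le_exp.2 (ciInf_le hbdd y.1)
    have h2 := integral_mono (μ := ν) (integrable_const _)
      ((hTc _ continuous_const).integrable_of_hasCompactSupport
        (HasCompactSupport.of_compactSpace _)) hpt
    simpa using h2
  have hlam : 0 ≤ lam := le_trans (by positivity) hlb
  exact ⟨lam, ν, hprob, hlb, hν', fun E hE hi =>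
    aux_jac f hfc hfin φ hφc hTc lam hlam ν hν' E hE hi⟩
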